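/- arXiv:2211.17116 — 2 statements merged into one kernel-verified Lean document; each statement's English description precedes it below -/
import Mathlib

section
/- Suppose there exists a joint policy ζ_b such that the induced transition matrix P_{ζ_b} on S is irreducible and aperiodic, and fix δ > 0. Then there exist constants C > 0 and ρ ∈ (0,1) such that for every ζ ∈ Π_δ, every initial state s ∈ S, and every t ≥ 0: TV( P_ζ^t(s, ·), μ^ζ ) ≤ C ρ^t, where μ^ζ is the unique stationary distribution of P_ζ and P_ζ^t(s,·) is the s-th row of the t-th matrix power of P_ζ. -/
open scoped BigOperators

noncomputable section

namespace LPI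

/-- A probability distribution on a finite type, represented as a nonnegative
function summing to one. -/
def IsDist {X : Type} [Fintype X] (d : X → ℝ) : Prop :=
  (∀ x, 0 ≤ d x) ∧ ∑ x, d x = 1

/-- Total variation distance between two finitely supported distributions. -/
def tv {X : Type} [Fintype X] (d d' : X → ℝ) : ℝ :=
  (1 / 2) * ∑ x, |d x - d' x|

/-- A `σ`-regular distribution: positive entries with log-ratios bounded by `σ`. -/
def IsRegularDist {X : Type} (σ : ℝ) (d : X → ℝ) : Prop :=
  (∀ x, 0 < d x) ∧ ∀ x y, Real.log (d x / d y) ≤ σ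

/-- A `(ν,μ)`-decay matrix with respect to a distance function. -/
def IsDecayMat {n : ℕ} (dist : Fin n → Fin n → ℕ) (ν μ : ℝ)
    (M : Fin n → Fin n → ℝ) : Prop :=
  (∀ i j, 0 ≤ M i j) ∧
  (∀ i, ∑ j, M i j * ((dist i j : ℝ) + 1) ^ μ ≤ ν) ∧
  (∀ j, ∑ i, M i j * ((dist i j : ℝ) + 1) ^ μ ≤ ν)

variable {n : ℕ} {S A : Fin n → Type}
variable [∀ i, Fintype (S i)] [∀ i, Fintype (A i)]
variable [∀ i, DecidableEq (S i)] [∀ i, DecidableEq (A i)]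
variable [∀ i, Nonempty (S i)] [∀ i, Nonempty (A i)]

/-- Probability that the joint policy `ζ` selects the joint action `a` in state `s`. -/
def jprob (ζ : ∀ i : Fin n, (∀ j, S j) → A i → ℝ)
    (s : ∀ j, S j) (a : ∀ i, A i) : ℝ :=
  ∏ i, ζ i s (a i)

/-- Product of a tuple of local action distributions. -/
def prodd (π : ∀ i : Fin n, A i → ℝ) (a : ∀ i, A i) : ℝ :=
  ∏ i, π i (a i)

/-- A joint policy: each agent's local conditional distribution is a distribution. -/
def IsPolicy (ζ : ∀ i : Fin n, (∀ j, S j) → A i → ℝ) : Prop :=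
  ∀ i s, IsDist (ζ i s)

/-- Local transition kernels are distributions. -/
def IsKernel (P : ∀ i : Fin n, (∀ j, S j) → A i → S i → ℝ) : Prop :=
  ∀ i s a, IsDist (P i s a)

/-- The local kernel of agent `i` depends only on the states of the closed
neighborhood `N_i` of `i`. -/
def IsLocalKernel (G : SimpleGraph (Fin n))
    (P : ∀ i : Fin n, (∀ j, S j) → A i → S i → ℝ) : Prop :=
  ∀ i : Fin n, ∀ s s' : ∀ j, S j,
    (∀ j, (j = i ∨ G.Adj i j) → s j = s' j) → ∀ a, P i s a = P i s' a

/-- Factorized global transition probability `P(s'|s,a) = ∏ i P_i(s'_i|s,a_i)`. -/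
def Pglob (P : ∀ i : Fin n, (∀ j, S j) → A i → S i → ℝ)
    (s : ∀ j, S j) (a : ∀ i, A i) (s' : ∀ j, S j) : ℝ :=
  ∏ i, P i s (a i) (s' i)

/-- Global stage reward `r(s,a) = (1/n) ∑ i r_i(s_i,a_i)`. -/
def rglob (r : ∀ i : Fin n, S i → A i → ℝ) (s : ∀ j, S j) (a : ∀ i, A i) : ℝ :=
  (1 / (n : ℝ)) * ∑ i, r i (s i) (a i)

/-- Transition matrix on global states induced by joint policy `ζ`. -/
def Pmat (P : ∀ i : Fin n, (∀ j, S j) → A i → S i → ℝ)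
    (ζ : ∀ i : Fin n, (∀ j, S j) → A i → ℝ) :
    Matrix (∀ j, S j) (∀ j, S j) ℝ :=
  Matrix.of fun s s' => ∑ a : ∀ i, A i, jprob ζ s a * Pglob P s a s'

/-- Entropy-regularized one-step reward of policy `ζ`. -/
def gz (τ : ℝ) (r : ∀ i : Fin n, S i → A i → ℝ)
    (ζ : ∀ i : Fin n, (∀ j, S j) → A i → ℝ) (s : ∀ j, S j) : ℝ :=
  ∑ a : ∀ i, A i, jprob ζ s a * (rglob r s a - τ * Real.log (jprob ζ s a))

/-- Entropy-regularized value function `V^ζ = ∑_t γ^t (P^ζ)^t g^ζ`. -/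
def Vz (γ τ : ℝ) (P : ∀ i : Fin n, (∀ j, S j) → A i → S i → ℝ)
    (r : ∀ i : Fin n, S i → A i → ℝ)
    (ζ : ∀ i : Fin n, (∀ j, S j) → A i → ℝ) : (∀ j, S j) → ℝ :=
  fun s => ∑' t : ℕ, γ ^ t * ((Pmat P ζ ^ t).mulVec (gz τ r ζ)) s

/-- Objective `J(ζ) = ∑_s ρ(s) V^ζ(s)`. -/
def Jobj (γ τ : ℝ) (P : ∀ i : Fin n, (∀ j, S j) → A i → S i → ℝ)
    (r : ∀ i : Fin n, S i → A i → ℝ)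
    (ζ : ∀ i : Fin n, (∀ j, S j) → A i → ℝ) (ρ : (∀ j, S j) → ℝ) : ℝ :=
  ∑ s, ρ s * Vz γ τ P r ζ s

/-- Entropy-regularized Bellman optimal operator. -/
def bellman (γ τ : ℝ) (P : ∀ i : Fin n, (∀ j, S j) → A i → S i → ℝ)
    (r : ∀ i : Fin n, S i → A i → ℝ)
    (V : (∀ j, S j) → ℝ) : (∀ j, S j) → ℝ :=
  fun s => sSup { x : ℝ | ∃ π : ∀ i : Fin n, A i → ℝ, (∀ i, IsDist (π i)) ∧
    x = ∑ a : ∀ i, A i, prodd π a *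
      (rglob r s a - τ * Real.log (prodd π a) +
        γ * ∑ s', Pglob P s a s' * V s') }

/-- Local entropy-regularized one-step reward of agent `i`. -/
def gzi (τ : ℝ) (r : ∀ i : Fin n, S i → A i → ℝ)
    (ζ : ∀ i : Fin n, (∀ j, S j) → A i → ℝ) (i : Fin n) (s : ∀ j, S j) : ℝ :=
  ∑ a : ∀ k, A k, jprob ζ s a *
    (r i (s i) (a i) - (n : ℝ) * τ * Real.log (ζ i s (a i)))

/-- Local value function `V_i^ζ`. -/
def Vzi (γ τ : ℝ) (P : ∀ i : Fin n, (∀ j, S j) → A i → S i → ℝ)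
    (r : ∀ i : Fin n, S i → A i → ℝ)
    (ζ : ∀ i : Fin n, (∀ j, S j) → A i → ℝ) (i : Fin n) : (∀ j, S j) → ℝ :=
  fun s => ∑' t : ℕ, γ ^ t * ((Pmat P ζ ^ t).mulVec (gzi τ r ζ i)) s

/-- Local Q-function `Q_i^ζ(s,a) = r_i(s_i,a_i) + γ ∑_{s'} P(s'|s,a) V_i^ζ(s')`. -/
def Qzi (γ τ : ℝ) (P : ∀ i : Fin n, (∀ j, S j) → A i → S i → ℝ)
    (r : ∀ i : Fin n, S i → A i → ℝ)
    (ζ : ∀ i : Fin n, (∀ j, S j) → A i → ℝ) (i : Fin n)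
    (s : ∀ j, S j) (a : ∀ k, A k) : ℝ :=
  r i (s i) (a i) + γ * ∑ s', Pglob P s a s' * Vzi γ τ P r ζ i s'

/-- Global Q-function `Q^ζ(s,a) = r(s,a) + γ ∑_{s'} P(s'|s,a) V^ζ(s')`. -/
def Qglob (γ τ : ℝ) (P : ∀ i : Fin n, (∀ j, S j) → A i → S i → ℝ)
    (r : ∀ i : Fin n, S i → A i → ℝ)
    (ζ : ∀ i : Fin n, (∀ j, S j) → A i → ℝ)
    (s : ∀ j, S j) (a : ∀ k, A k) : ℝ :=
  rglob r s a + γ * ∑ s', Pglob P s a s' * Vz γ τ P r ζ s'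

/-- Interaction matrix `Z^ζ` of a joint policy. -/
def Zpol (ζ : ∀ i : Fin n, (∀ j, S j) → A i → ℝ) (i j : Fin n) : ℝ :=
  ⨆ s : ∀ k, S k, ⨆ sj : S j, tv (ζ i s) (ζ i (Function.update s j sj))

/-- Interaction matrix `Z^Q` of a tuple of local Q-functions: varying the
state-action pair of a single agent `j`. -/
def ZQ (Q : Fin n → (∀ j, S j) → (∀ j, A j) → ℝ) (i j : Fin n) : ℝ :=
  ⨆ s : ∀ k, S k, ⨆ a : ∀ k, A k, ⨆ sj : S j, ⨆ aj : A j,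
    |Q i s a - Q i (Function.update s j sj) (Function.update a j aj)|

/-- Second-order interaction matrix `H^Q` of a global Q-function. -/
def HQ (Q : (∀ j, S j) → (∀ j, A j) → ℝ) (i j : Fin n) : ℝ :=
  ⨆ s : ∀ k, S k, ⨆ a : ∀ k, A k, ⨆ si : S i, ⨆ ai : A i, ⨆ sj : S j, ⨆ aj : A j,
    |(Q s a - Q (Function.update s i si) (Function.update a i ai)) -
      (Q (Function.update s j sj) (Function.update a j aj) -
        Q (Function.update (Function.update s i si) j sj)
          (Function.update (Function.update a i ai) j aj))|

/-- The matrix `C` measuring interaction strength of the transition kernels. -/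
def Cmat (G : SimpleGraph (Fin n)) [DecidableRel G.Adj]
    (P : ∀ i : Fin n, (∀ j, S j) → A i → S i → ℝ) (i j : Fin n) : ℝ :=
  if j = i then
    ⨆ s : ∀ k, S k, ⨆ si' : S i, ⨆ ai : A i, ⨆ ai' : A i,
      tv (P i s ai) (P i (Function.update s i si') ai')
  else if G.Adj i j then
    ⨆ s : ∀ k, S k, ⨆ sj' : S j, ⨆ ai : A i,
      tv (P i s ai) (P i (Function.update s j sj') ai)
  else 0

/-- A `σ`-regular joint policy. -/
def IsRegularPolicy (σ : ℝ) (ζ : ∀ i : Fin n, (∀ j, S j) → A i → ℝ) : Prop :=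
  ∀ i s, IsRegularDist σ (ζ i s)

/-- A `(ν,μ)`-decay joint policy. -/
def IsDecayPolicy (dist : Fin n → Fin n → ℕ) (ν μ : ℝ)
    (ζ : ∀ i : Fin n, (∀ j, S j) → A i → ℝ) : Prop :=
  IsDecayMat dist ν μ (Zpol ζ)

/-- The policy class `Δ_{ν,μ,σ}`. -/
def InDelta (dist : Fin n → Fin n → ℕ) (ν μ σ : ℝ)
    (ζ : ∀ i : Fin n, (∀ j, S j) → A i → ℝ) : Prop :=
  IsPolicy ζ ∧ IsDecayPolicy dist ν μ ζ ∧ IsRegularPolicy σ ζ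

/-- A `κ`-hop localized joint policy. -/
def IsKHop (G : SimpleGraph (Fin n)) (κ : ℕ)
    (ζ : ∀ i : Fin n, (∀ j, S j) → A i → ℝ) : Prop :=
  ∀ i : Fin n, ∀ s s' : ∀ j, S j,
    (∀ j, G.dist i j ≤ κ → s j = s' j) → ζ i s = ζ i s'

/-- The largest local action space cardinality `A_max`. -/
def Amax (A : Fin n → Type) [∀ i, Fintype (A i)] : ℕ :=
  Finset.univ.sup fun i => Fintype.card (A i)

/-- An irreducible stochastic matrix on a finite set. -/
def MatIrreducible {X : Type} [Fintype X] [DecidableEq X] (M : Matrix X X ℝ) : Prop :=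
  ∀ s s', ∃ t : ℕ, 1 ≤ t ∧ 0 < (M ^ t) s s'

/-- An aperiodic stochastic matrix: for each state `s`, the only common divisor
of the return times is `1` (i.e. `gcd {t ≥ 1 | (M^t)_{ss} > 0} = 1`). -/
def MatAperiodic {X : Type} [Fintype X] [DecidableEq X] (M : Matrix X X ℝ) : Prop :=
  ∀ s, ∀ d : ℕ, (∀ t : ℕ, 1 ≤ t → 0 < (M ^ t) s s → d ∣ t) → d = 1

/-- A stationary distribution of a transition matrix. -/
def IsStationary {X : Type} [Fintype X] (M : Matrix X X ℝ) (μ : X → ℝ) : Prop :=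
  IsDist μ ∧ Matrix.vecMul μ M = μ


/-! ### Helper lemmas -/

/-- `ℓ¹` norm. -/
def l1 {X : Type} [Fintype X] (v : X → ℝ) : ℝ := ∑ x, |v x|

theorem l1_nonneg {X : Type} [Fintype X] (v : X → ℝ) : 0 ≤ l1 v :=
  Finset.sum_nonneg fun _ _ => abs_nonneg _

theorem l1_vecMul_le {X : Type} [Fintype X] (K : Matrix X X ℝ) (c : ℝ)
    (h0 : ∀ x y, 0 ≤ K x y) (h1 : ∀ x, ∑ y, K x y = c) (v : X → ℝ) :
    l1 (Matrix.vecMul v K) ≤ c * l1 v := by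
  unfold l1
  calc ∑ y, |Matrix.vecMul v K y| ≤ ∑ y, ∑ x, |v x| * K x y := by
        refine Finset.sum_le_sum fun y _ => ?_
        simp only [Matrix.vecMul, dotProduct]
        refine (Finset.abs_sum_le_sum_abs _ _).trans (le_of_eq ?_)
        refine Finset.sum_congr rfl fun x _ => ?_
        rw [abs_mul, abs_of_nonneg (h0 x y)]
    _ = c * ∑ x, |v x| := by
        rw [Finset.sum_comm, Finset.mul_sum]
        refine Finset.sum_congr rfl fun x _ => ?_
        rw [← Finset.mul_sum, h1, mul_comm]

theorem sum_vecMul {X : Type} [Fintype X] (K : Matrix X X ℝ) (c : ℝ)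
    (h1 : ∀ x, ∑ y, K x y = c) (v : X → ℝ) :
    ∑ y, Matrix.vecMul v K y = c * ∑ x, v x := by
  simp only [Matrix.vecMul, dotProduct]
  rw [Finset.sum_comm, Finset.mul_sum]
  refine Finset.sum_congr rfl fun x _ => ?_
  rw [← Finset.mul_sum, h1, mul_comm]

theorem pow_nonneg' {X : Type} [Fintype X] [DecidableEq X] (M : Matrix X X ℝ)
    (h0 : ∀ x y, 0 ≤ M x y) (t : ℕ) : ∀ x y, 0 ≤ (M ^ t) x y := by
  induction t with
  | zero => intro x y; rw [pow_zero, Matrix.one_apply]; split_ifs <;> norm_num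
  | succ t ih =>
    intro x y
    rw [pow_succ, Matrix.mul_apply]
    exact Finset.sum_nonneg fun z _ => mul_nonneg (ih x z) (h0 z y)

theorem pow_row {X : Type} [Fintype X] [DecidableEq X] (M : Matrix X X ℝ)
    (h1 : ∀ x, ∑ y, M x y = 1) (t : ℕ) : ∀ x, ∑ y, (M ^ t) x y = 1 := by
  induction t with
  | zero => intro x; simp [Matrix.one_apply]
  | succ t ih =>
    intro x
    simp only [pow_succ, Matrix.mul_apply]
    rw [Finset.sum_comm]
    simp only [← Finset.mul_sum, h1, mul_one, ih]

theorem pow_lower {X : Type} [Fintype X] [DecidableEq X] (M B : Matrix X X ℝ) (δ : ℝ)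
    (hδ : 0 ≤ δ) (hB : ∀ x y, 0 ≤ B x y) (h : ∀ x y, δ * B x y ≤ M x y) (t : ℕ) :
    ∀ x y, δ ^ t * (B ^ t) x y ≤ (M ^ t) x y := by
  have hM : ∀ x y, 0 ≤ M x y := fun x y => (mul_nonneg hδ (hB x y)).trans (h x y)
  induction t with
  | zero => intro x y; simp
  | succ t ih =>
    intro x y
    simp only [pow_succ, Matrix.mul_apply]
    rw [Finset.mul_sum]
    refine Finset.sum_le_sum fun z _ => ?_
    calc δ ^ t * δ * ((B ^ t) x z * B z y) = (δ ^ t * (B ^ t) x z) * (δ * B z y) := by ring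
      _ ≤ _ := mul_le_mul (ih x z) (h z y) (mul_nonneg hδ (hB z y)) (pow_nonneg' M hM t x z)

theorem pow_add_pos {X : Type} [Fintype X] [DecidableEq X] (B : Matrix X X ℝ)
    (hB : ∀ x y, 0 ≤ B x y) (t r : ℕ) (x y z : X) (h1 : 0 < (B ^ t) x y)
    (h2 : 0 < (B ^ r) y z) : 0 < (B ^ (t + r)) x z := by
  rw [pow_add, Matrix.mul_apply]
  refine Finset.sum_pos' (fun w _ => mul_nonneg (pow_nonneg' B hB t x w) (pow_nonneg' B hB r w z))
    ⟨y, Finset.mem_univ _, mul_pos h1 h2⟩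

theorem exists_primitive {X : Type} [Fintype X] [DecidableEq X] (B : Matrix X X ℝ)
    (hB : ∀ x y, 0 ≤ B x y) (hirr : MatIrreducible B) (hap : MatAperiodic B) :
    ∃ N : ℕ, 1 ≤ N ∧ ∀ x y, 0 < (B ^ N) x y := by
  have h1 : ∀ x, ∃ m : ℕ, ∀ t ≥ m, 0 < (B ^ t) x x := by
    intro x
    let T : AddSubmonoid ℕ :=
      { carrier := {t | 0 < (B ^ t) x x}
        zero_mem' := by simp
        add_mem' := fun {a b} ha hb => pow_add_pos B hB a b x x x ha hb }
    obtain ⟨m, hm⟩ := Nat.exists_mem_closure_of_ge (T : Set ℕ)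
    have hg : Nat.setGcd (T : Set ℕ) = 1 :=
      hap x _ fun t _ ht => Nat.setGcd_dvd_of_mem (s := (T : Set ℕ)) ht
    refine ⟨m, fun t ht => ?_⟩
    have := hm t ht (by rw [hg]; exact one_dvd _)
    rw [AddSubmonoid.closure_eq] at this
    exact this
  choose m hm using h1
  choose r hr1 hr using hirr
  refine ⟨(∑ x, m x) + (∑ x, ∑ y, r x y) + 1, by omega, fun x y => ?_⟩
  have e1 : m x ≤ ∑ x, m x := Finset.single_le_sum (fun _ _ => Nat.zero_le _) (Finset.mem_univ x)
  have e2 : ∑ y, r x y ≤ ∑ x, ∑ y, r x y :=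
    Finset.single_le_sum (f := fun x => ∑ y, r x y) (fun _ _ => Nat.zero_le _) (Finset.mem_univ x)
  have e3 : r x y ≤ ∑ y, r x y :=
    Finset.single_le_sum (f := fun y => r x y) (fun _ _ => Nat.zero_le _) (Finset.mem_univ y)
  have := pow_add_pos B hB ((∑ x, m x) + (∑ x, ∑ y, r x y) + 1 - r x y) (r x y) x x y
    (hm x _ (by omega)) (hr x y)
  rwa [Nat.sub_add_cancel (by omega)] at this

theorem l1_contract {X : Type} [Fintype X] (K : Matrix X X ℝ) (ε : ℝ)
    (hK : ∀ x y, ε ≤ K x y) (h1 : ∀ x, ∑ y, K x y = 1) (v : X → ℝ) (hv : ∑ x, v x = 0) :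
    l1 (Matrix.vecMul v K) ≤ (1 - Fintype.card X * ε) * l1 v := by
  have : Matrix.vecMul v K = Matrix.vecMul v (Matrix.of fun x y => K x y - ε) := by
    funext y
    simp only [Matrix.vecMul, dotProduct, Matrix.of_apply, mul_sub, Finset.sum_sub_distrib]
    rw [← Finset.sum_mul, hv]; simp
  rw [this]
  refine l1_vecMul_le _ _ (fun x y => ?_) (fun x => ?_) v
  · simpa using hK x y
  · simp [Finset.sum_sub_distrib, h1]

theorem l1_pow_le {X : Type} [Fintype X] [DecidableEq X] (M : Matrix X X ℝ)
    (h0 : ∀ x y, 0 ≤ M x y) (h1 : ∀ x, ∑ y, M x y = 1) (N : ℕ) (hN : 1 ≤ N) (ε ρ : ℝ)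
    (hε : ∀ x y, ε ≤ (M ^ N) x y) (hρ0 : 0 < ρ) (hρ1 : ρ ≤ 1)
    (hρ : ρ ^ N = 1 - Fintype.card X * ε) (v : X → ℝ) (hv : ∑ x, v x = 0) (t : ℕ) :
    l1 (Matrix.vecMul v (M ^ t)) ≤ (ρ ^ N)⁻¹ * ρ ^ t * l1 v := by
  have step : ∀ q, l1 (Matrix.vecMul v (M ^ (N * q))) ≤ (ρ ^ N) ^ q * l1 v := by
    intro q
    induction q with
    | zero => simp
    | succ q ih =>
      rw [Nat.mul_succ, pow_add, ← Matrix.vecMul_vecMul]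
      refine (l1_contract (M ^ N) ε hε (pow_row M h1 N) _ ?_).trans ?_
      · rw [sum_vecMul _ 1 (pow_row M h1 _), hv, mul_zero]
      · rw [← hρ, pow_succ', mul_assoc]
        exact mul_le_mul_of_nonneg_left ih (by positivity)
  have ht : t = N * (t / N) + t % N := (Nat.div_add_mod t N).symm
  have hlt : t % N < N := Nat.mod_lt _ (by omega)
  have e1 : l1 (Matrix.vecMul v (M ^ t)) ≤ l1 (Matrix.vecMul v (M ^ (N * (t / N)))) := by
    conv_lhs => rw [ht, pow_add, ← Matrix.vecMul_vecMul]
    simpa using l1_vecMul_le (M ^ (t % N)) 1 (pow_nonneg' M h0 _) (pow_row M h1 _)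
      (Matrix.vecMul v (M ^ (N * (t / N))))
  refine e1.trans ((step _).trans (mul_le_mul_of_nonneg_right ?_ (l1_nonneg v)))
  rw [le_inv_mul_iff₀ (by positivity), ← pow_mul, ← pow_add]
  exact pow_le_pow_of_le_one hρ0.le hρ1 (by omega)

theorem vecMul_pow_stat {X : Type} [Fintype X] [DecidableEq X] (M : Matrix X X ℝ) (μ : X → ℝ)
    (h : Matrix.vecMul μ M = μ) (t : ℕ) : Matrix.vecMul μ (M ^ t) = μ := by
  induction t with
  | zero => simp
  | succ t ih => rw [pow_succ, ← Matrix.vecMul_vecMul, ih, h]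

theorem l1_dist_le {X : Type} [Fintype X] (p q : X → ℝ) (hp : IsDist p) (hq : IsDist q) :
    l1 (p - q) ≤ 2 := by
  calc l1 (p - q) ≤ ∑ x, (p x + q x) := by
        refine Finset.sum_le_sum fun x _ => ?_
        have := hp.1 x
        have := hq.1 x
        rw [Pi.sub_apply, abs_le]
        constructor <;> linarith
    _ = 2 := by rw [Finset.sum_add_distrib, hp.2, hq.2]; norm_num

theorem mixing {X : Type} [Fintype X] [DecidableEq X] [Nonempty X] (M : Matrix X X ℝ)
    (h0 : ∀ x y, 0 ≤ M x y) (h1 : ∀ x, ∑ y, M x y = 1) (N : ℕ) (hN : 1 ≤ N) (ε ρ : ℝ)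
    (hε : ∀ x y, ε ≤ (M ^ N) x y) (hρ0 : 0 < ρ) (hρ1 : ρ < 1)
    (hρ : ρ ^ N = 1 - Fintype.card X * ε) :
    (∃! μ : X → ℝ, IsStationary M μ) ∧ ∀ μ : X → ℝ, IsStationary M μ →
      ∀ (s : X) (t : ℕ), tv (fun s' => (M ^ t) s s') μ ≤ (ρ ^ N)⁻¹ * ρ ^ t := by
  have hdist : ∀ t s, IsDist (fun s' => (M ^ t) s s') := fun t s =>
    ⟨fun y => pow_nonneg' M h0 t s y, pow_row M h1 t s⟩
  have hrow : ∀ t s, Matrix.vecMul (fun s' => (M ^ 0) s s') (M ^ t) = fun s' => (M ^ t) s s' := by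
    intro t s
    funext y
    have := congrFun (congrFun (one_mul (M ^ t)) s) y
    rw [Matrix.mul_apply] at this
    simpa [Matrix.vecMul, dotProduct] using this
  have hC : 0 < (ρ ^ N)⁻¹ := by positivity
  have key : ∀ p q : X → ℝ, IsDist p → IsDist q → ∀ t,
      l1 (Matrix.vecMul p (M ^ t) - Matrix.vecMul q (M ^ t)) ≤ 2 * ((ρ ^ N)⁻¹ * ρ ^ t) := by
    intro p q hp hq t
    rw [← Matrix.sub_vecMul]
    have hv : ∑ x, (p - q) x = 0 := by simp [Finset.sum_sub_distrib, hp.2, hq.2]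
    have a := l1_pow_le M h0 h1 N hN ε ρ hε hρ0 hρ1.le hρ (p - q) hv t
    have b := l1_dist_le p q hp hq
    have c : 0 ≤ (ρ ^ N)⁻¹ * ρ ^ t := by positivity
    nlinarith
  have hle : ∀ (v : X → ℝ) x, |v x| ≤ l1 v := fun v x =>
    Finset.single_le_sum (f := fun x => |v x|) (fun _ _ => abs_nonneg _) (Finset.mem_univ x)
  refine ⟨?_, ?_⟩
  · obtain ⟨s⟩ := ‹Nonempty X›
    have hc : ∀ x, ∃ l, Filter.Tendsto (fun t => (M ^ t) s x) Filter.atTop (nhds l) := by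
      intro x
      refine cauchySeq_tendsto_of_complete
        (cauchySeq_of_le_geometric ρ (2 * (ρ ^ N)⁻¹) hρ1 fun t => ?_)
      have k := key _ _ (hdist 0 s) (hdist 1 s) t
      have e : Matrix.vecMul (fun s' => (M ^ 1) s s') (M ^ t) = fun s' => (M ^ (t + 1)) s s' := by
        rw [← hrow 1 s, Matrix.vecMul_vecMul, ← pow_add, hrow, add_comm]
      rw [hrow, e] at k
      have k2 := hle ((fun s' => (M ^ t) s s') - fun s' => (M ^ (t + 1)) s s') x
      rw [Real.dist_eq, mul_assoc]
      exact k2.trans k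
    choose μ hμ using hc
    have hst : IsStationary M μ := by
      refine ⟨⟨fun x => ge_of_tendsto' (hμ x) fun t => pow_nonneg' M h0 t s x, ?_⟩, ?_⟩
      · refine tendsto_nhds_unique (tendsto_finsetSum Finset.univ fun x _ => hμ x) ?_
        simp only [pow_row M h1]
        exact tendsto_const_nhds
      · funext y
        have a : Filter.Tendsto (fun t => ∑ x, (M ^ t) s x * M x y) Filter.atTop
            (nhds (∑ x, μ x * M x y)) :=
          tendsto_finsetSum Finset.univ fun x _ => (hμ x).mul_const _
        have b := (hμ y).comp (Filter.tendsto_add_atTop_nat 1)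
        refine tendsto_nhds_unique a (b.congr fun t => ?_)
        simp [Function.comp, pow_succ, Matrix.mul_apply]
    refine ⟨μ, hst, fun ν hν => ?_⟩
    funext x
    have lim : Filter.Tendsto (fun t : ℕ => 2 * ((ρ ^ N)⁻¹ * ρ ^ t)) Filter.atTop (nhds 0) := by
      simpa using ((tendsto_pow_atTop_nhds_zero_of_lt_one hρ0.le hρ1).const_mul
        ((ρ ^ N)⁻¹)).const_mul 2
    have : |(ν - μ) x| ≤ 0 := by
      refine ge_of_tendsto' lim fun t => ?_
      have k := key ν μ hν.1 hst.1 t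
      rw [vecMul_pow_stat M ν hν.2, vecMul_pow_stat M μ hst.2] at k
      exact (hle _ x).trans k
    have := abs_nonpos_iff.mp this
    rw [Pi.sub_apply] at this
    linarith
  · intro μ hμ s t
    have k := key _ μ (hdist 0 s) hμ.1 t
    rw [vecMul_pow_stat M μ hμ.2, hrow] at k
    have : tv (fun s' => (M ^ t) s s') μ = 1 / 2 * l1 ((fun s' => (M ^ t) s s') - μ) := rfl
    rw [this]
    linarith

/-- uniform geometric mixing over `Π_δ`. If some joint policy `ζ_b` induces
an irreducible and aperiodic chain, then there are `C > 0` and `ρ ∈ (0,1)` such that for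
every `ζ ∈ Π_δ`, its (unique) stationary distribution `μ^ζ` satisfies
`TV(P_ζ^t(s,·), μ^ζ) ≤ C ρ^t` for every initial state `s` and every `t ≥ 0`. -/
theorem stmt_18 {n : ℕ} (G : SimpleGraph (Fin n))
    (S A : Fin n → Type)
    [∀ i, Fintype (S i)] [∀ i, Fintype (A i)]
    [∀ i, DecidableEq (S i)] [∀ i, DecidableEq (A i)]
    [∀ i, Nonempty (S i)] [∀ i, Nonempty (A i)]
    (P : ∀ i : Fin n, (∀ j, S j) → A i → S i → ℝ)
    (hP : IsKernel P) (hPloc : IsLocalKernel G P)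
    (ζb : ∀ i : Fin n, (∀ j, S j) → A i → ℝ) (hζb : IsPolicy ζb)
    (hirr : MatIrreducible (Pmat P ζb)) (hap : MatAperiodic (Pmat P ζb))
    (δ : ℝ) (hδ : 0 < δ) :
    ∃ C ρ : ℝ, 0 < C ∧ 0 < ρ ∧ ρ < 1 ∧
      ∀ ζ : ∀ i : Fin n, (∀ j, S j) → A i → ℝ, IsPolicy ζ →
        (∀ s a, δ ≤ jprob ζ s a) →
        (∃! μ : (∀ j, S j) → ℝ, IsStationary (Pmat P ζ) μ) ∧
        ∀ μ : (∀ j, S j) → ℝ, IsStationary (Pmat P ζ) μ →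
          ∀ (s : ∀ j, S j) (t : ℕ),
            tv (fun s' => (Pmat P ζ ^ t) s s') μ ≤ C * ρ ^ t := by
  have hPg0 : ∀ s a s', 0 ≤ Pglob P s a s' := fun s a s' =>
    Finset.prod_nonneg fun i _ => (hP i s (a i)).1 _
  have hPg1 : ∀ s a, ∑ s', Pglob P s a s' = 1 := by
    intro s a
    unfold Pglob
    rw [← Fintype.prod_sum (fun i x => P i s (a i) x)]
    exact Finset.prod_eq_one fun i _ => (hP i s (a i)).2
  have hj0 : ∀ ζ : ∀ i : Fin n, (∀ j, S j) → A i → ℝ, IsPolicy ζ → ∀ s a, 0 ≤ jprob ζ s a :=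
    fun ζ hζ s a => Finset.prod_nonneg fun i _ => (hζ i s).1 _
  have hj1 : ∀ ζ : ∀ i : Fin n, (∀ j, S j) → A i → ℝ, IsPolicy ζ → ∀ s, ∑ a, jprob ζ s a = 1 := by
    intro ζ hζ s
    unfold jprob
    rw [← Fintype.prod_sum (fun i x => ζ i s x)]
    exact Finset.prod_eq_one fun i _ => (hζ i s).2
  have hM0 : ∀ ζ : ∀ i : Fin n, (∀ j, S j) → A i → ℝ, IsPolicy ζ → ∀ s s', 0 ≤ Pmat P ζ s s' :=
    fun ζ hζ s s' => Finset.sum_nonneg fun a _ => mul_nonneg (hj0 ζ hζ s a) (hPg0 s a s')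
  have hM1 : ∀ ζ : ∀ i : Fin n, (∀ j, S j) → A i → ℝ, IsPolicy ζ →
      ∀ s, ∑ s', Pmat P ζ s s' = 1 := by
    intro ζ hζ s
    simp only [Pmat, Matrix.of_apply]
    rw [Finset.sum_comm]
    simp only [← Finset.mul_sum, hPg1, mul_one, hj1 ζ hζ]
  obtain ⟨N, hN, hpos⟩ := exists_primitive (Pmat P ζb) (hM0 ζb hζb) hirr hap
  obtain ⟨z, hz⟩ := Finite.exists_min
    (fun z : (∀ j, S j) × (∀ j, S j) => (Pmat P ζb ^ N) z.1 z.2)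
  set m := (Pmat P ζb ^ N) z.1 z.2 with hm
  have hm0 : 0 < m := hpos _ _
  have hcard : (0 : ℝ) < Fintype.card (∀ j, S j) := by exact_mod_cast Fintype.card_pos
  set ε : ℝ := min (δ ^ N * m) (1 / (2 * Fintype.card (∀ j, S j))) with hεd
  have hε0 : 0 < ε := lt_min (by positivity) (by positivity)
  have hκ : Fintype.card (∀ j, S j) * ε ≤ 1 / 2 := by
    calc (Fintype.card (∀ j, S j) : ℝ) * ε
        ≤ Fintype.card (∀ j, S j) * (1 / (2 * Fintype.card (∀ j, S j))) :=
          mul_le_mul_of_nonneg_left (min_le_right _ _) hcard.le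
      _ = 1 / 2 := by field_simp
  have hκ0 : 0 < Fintype.card (∀ j, S j) * ε := mul_pos hcard hε0
  set β : ℝ := 1 - Fintype.card (∀ j, S j) * ε with hβ
  have hβ0 : 0 < β := by linarith
  have hβ1 : β < 1 := by linarith
  have hρN : (β ^ ((N : ℝ)⁻¹)) ^ N = β := Real.rpow_inv_natCast_pow hβ0.le (by omega)
  have hρ0 : 0 < β ^ ((N : ℝ)⁻¹) := Real.rpow_pos_of_pos hβ0 _
  have hρ1 : β ^ ((N : ℝ)⁻¹) < 1 :=
    Real.rpow_lt_one hβ0.le hβ1 (inv_pos.mpr (by exact_mod_cast hN))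
  refine ⟨((β ^ ((N : ℝ)⁻¹)) ^ N)⁻¹, β ^ ((N : ℝ)⁻¹), by positivity, hρ0, hρ1, ?_⟩
  intro ζ hζ hδζ
  refine mixing (Pmat P ζ) (hM0 ζ hζ) (hM1 ζ hζ) N hN ε _ (fun x y => ?_) hρ0 hρ1 hρN
  have hlow := pow_lower (Pmat P ζ) (Pmat P ζb) δ hδ.le (hM0 ζb hζb) (fun s s' => ?_) N x y
  · refine (min_le_left _ _).trans (le_trans ?_ hlow)
    exact mul_le_mul_of_nonneg_left (hz (x, y)) (by positivity)
  · simp only [Pmat, Matrix.of_apply]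
    rw [Finset.mul_sum]
    refine Finset.sum_le_sum fun a _ => ?_
    rw [← mul_assoc]
    refine mul_le_mul_of_nonneg_right ?_ (hPg0 s a s')
    have hb : jprob ζb s a ≤ 1 := by
      rw [← hj1 ζb hζb s]
      exact Finset.single_le_sum (fun a _ => hj0 ζb hζb s a) (Finset.mem_univ a)
    calc δ * jprob ζb s a ≤ δ * 1 := mul_le_mul_of_nonneg_left hb hδ.le
      _ ≤ jprob ζ s a := by rw [mul_one]; exact hδζ s a


end LPI
end
end

section
/- Let P_1 and P_2 be row-stochastic matrices on a finite state space, each admitting a unique stationary distribution, μ_1 and μ_2 respectively. Suppose there exist C_1 > 0 and ρ_1 ∈ (0,1) such that ‖P_1^t − M_1‖_2 ≤ C_1 ρ_1^t for all t ≥ 0, where M_1 is the matrix all of whose rows equal μ_1 and ‖·‖_2 is the spectral (operator ℓ_2) norm. Then there exists a constant L (depending only on C_1, ρ_1, and the spectral norms of P_1 and P_2) such that ‖μ_1 − μ_2‖_2 ≤ L ‖P_1 − P_2‖_2. -/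
open scoped BigOperators

noncomputable section

/-- Euclidean (ℓ²) norm of a finitely supported vector. -/
def l2norm {ι : Type} [Fintype ι] (v : ι → ℝ) : ℝ :=
  Real.sqrt (∑ i, v i ^ 2)

/-- Spectral norm (operator norm induced by the Euclidean norm) of a matrix. -/
def specNorm {ι : Type} [Fintype ι] (M : Matrix ι ι ℝ) : ℝ :=
  ⨆ v : { v : ι → ℝ // l2norm v ≤ 1 }, l2norm (M.mulVec v.1)

/-- A row-stochastic matrix. -/
def RowStochastic {ι : Type} [Fintype ι] (M : Matrix ι ι ℝ) : Prop :=
  (∀ i j, 0 ≤ M i j) ∧ ∀ i, ∑ j, M i j = 1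

/-- A stationary distribution of `M`: a probability row vector `μ` with `μ M = μ`. -/
def IsStationaryVec {ι : Type} [Fintype ι] (M : Matrix ι ι ℝ) (μ : ι → ℝ) : Prop :=
  (∀ i, 0 ≤ μ i) ∧ (∑ i, μ i = 1) ∧ Matrix.vecMul μ M = μ

theorem aux_l2norm_eq {ι : Type} [Fintype ι] (v : ι → ℝ) :
    l2norm v = ‖(WithLp.toLp 2 v : EuclideanSpace ℝ ι)‖ := by
  simp [l2norm, EuclideanSpace.norm_eq]

theorem aux_l2norm_nonneg {ι : Type} [Fintype ι] (v : ι → ℝ) : 0 ≤ l2norm v :=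
  Real.sqrt_nonneg _

theorem aux_l2norm_add {ι : Type} [Fintype ι] (v w : ι → ℝ) :
    l2norm (v + w) ≤ l2norm v + l2norm w := by
  simp only [aux_l2norm_eq, WithLp.toLp_add]
  exact norm_add_le _ _

theorem aux_l2norm_smul {ι : Type} [Fintype ι] (c : ℝ) (v : ι → ℝ) :
    l2norm (c • v) = |c| * l2norm v := by
  simp only [aux_l2norm_eq, WithLp.toLp_smul, norm_smul, Real.norm_eq_abs]

theorem aux_l2norm_sq {ι : Type} [Fintype ι] (v : ι → ℝ) :
    l2norm v ^ 2 = v ⬝ᵥ v := by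
  rw [l2norm, Real.sq_sqrt (Finset.sum_nonneg fun i _ => sq_nonneg _)]
  simp [dotProduct, sq]

theorem aux_cs {ι : Type} [Fintype ι] (v w : ι → ℝ) :
    v ⬝ᵥ w ≤ l2norm v * l2norm w := by
  exact Real.sum_mul_le_sqrt_mul_sqrt _ _ _

theorem aux_bdd {ι : Type} [Fintype ι] (M : Matrix ι ι ℝ) :
    BddAbove (Set.range fun v : { v : ι → ℝ // l2norm v ≤ 1 } => l2norm (M.mulVec v.1)) := by
  classical
  refine ⟨‖Matrix.toEuclideanCLM (𝕜 := ℝ) M‖, ?_⟩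
  rintro _ ⟨⟨v, hv⟩, rfl⟩
  simp only [aux_l2norm_eq] at hv ⊢
  have h := (Matrix.toEuclideanCLM (𝕜 := ℝ) M).le_opNorm (WithLp.toLp 2 v)
  rw [Matrix.toEuclideanCLM_toLp] at h
  exact h.trans (mul_le_of_le_one_right (norm_nonneg _) hv)

theorem aux_specNorm_nonneg {ι : Type} [Fintype ι] (M : Matrix ι ι ℝ) : 0 ≤ specNorm M :=
  Real.iSup_nonneg fun _ => aux_l2norm_nonneg _

theorem aux_mulVec {ι : Type} [Fintype ι] (M : Matrix ι ι ℝ) (v : ι → ℝ) :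
    l2norm (M.mulVec v) ≤ specNorm M * l2norm v := by
  rcases (aux_l2norm_nonneg v).eq_or_lt with h | h
  · have hv : v = 0 := by
      rw [aux_l2norm_eq, eq_comm, norm_eq_zero] at h
      simpa using h
    subst hv
    simp [l2norm]
  · have h1 : l2norm ((l2norm v)⁻¹ • v) ≤ 1 := by
      rw [aux_l2norm_smul, abs_of_pos (inv_pos.mpr h), inv_mul_cancel₀ h.ne']
    have h2 : l2norm (M.mulVec ((l2norm v)⁻¹ • v)) ≤ specNorm M :=
      le_ciSup (aux_bdd M) ⟨_, h1⟩
    rw [Matrix.mulVec_smul, aux_l2norm_smul, abs_of_pos (inv_pos.mpr h),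
      inv_mul_le_iff₀ h] at h2
    linarith

theorem aux_vecMul {ι : Type} [Fintype ι] (M : Matrix ι ι ℝ) (v : ι → ℝ) :
    l2norm (Matrix.vecMul v M) ≤ l2norm v * specNorm M := by
  rcases (aux_l2norm_nonneg (Matrix.vecMul v M)).eq_or_lt with h | h
  · rw [← h]
    exact mul_nonneg (aux_l2norm_nonneg _) (aux_specNorm_nonneg _)
  · have h1 := aux_l2norm_sq (Matrix.vecMul v M)
    rw [← Matrix.dotProduct_mulVec] at h1
    have h2 := aux_cs v (M.mulVec (Matrix.vecMul v M))
    have h3 := mul_le_mul_of_nonneg_left (aux_mulVec M (Matrix.vecMul v M)) (aux_l2norm_nonneg v)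
    refine le_of_mul_le_mul_right ?_ h
    nlinarith

theorem aux_prob {ι : Type} [Fintype ι] (μ : ι → ℝ) (h0 : ∀ i, 0 ≤ μ i) (h1 : ∑ i, μ i = 1) :
    l2norm μ ≤ 1 := by
  rw [l2norm, Real.sqrt_le_iff, one_pow]
  refine ⟨zero_le_one, ?_⟩
  conv_rhs => rw [← h1]
  refine Finset.sum_le_sum fun i _ => ?_
  have : μ i ≤ 1 := h1 ▸ Finset.single_le_sum (fun j _ => h0 j) (Finset.mem_univ i)
  nlinarith [h0 i]

theorem aux_rank_one {ι : Type} [Fintype ι] (μ v : ι → ℝ) (h : ∑ i, v i = 0) :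
    Matrix.vecMul v (Matrix.of fun _ j => μ j) = 0 := by
  ext j
  simp [Matrix.vecMul, dotProduct, ← Finset.sum_mul, h]

theorem aux_sum_vecMul {ι : Type} [Fintype ι] (M : Matrix ι ι ℝ) (hM : RowStochastic M)
    (v : ι → ℝ) : ∑ j, Matrix.vecMul v M j = ∑ i, v i := by
  simp only [Matrix.vecMul, dotProduct]
  rw [Finset.sum_comm]
  simp [← Finset.mul_sum, hM.2]

/-- there is a constant `L`, depending only on `C₁`, `ρ₁` and the spectral
norms of `P₁` and `P₂`, such that for any pair of row-stochastic matrices `P₁, P₂` with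
unique stationary distributions `μ₁, μ₂`, if `‖P₁^t − M₁‖₂ ≤ C₁ ρ₁^t` for all `t ≥ 0`
(where `M₁` has all rows equal to `μ₁`), then `‖μ₁ − μ₂‖₂ ≤ L ‖P₁ − P₂‖₂`. -/
theorem stmt_19 :
    ∃ L : ℝ → ℝ → ℝ → ℝ → ℝ,
      ∀ (ι : Type) [Fintype ι] [DecidableEq ι] [Nonempty ι],
      ∀ (P1 P2 : Matrix ι ι ℝ) (μ1 μ2 : ι → ℝ) (C1 ρ1 : ℝ),
        RowStochastic P1 → RowStochastic P2 →
        IsStationaryVec P1 μ1 → (∀ μ, IsStationaryVec P1 μ → μ = μ1) →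
        IsStationaryVec P2 μ2 → (∀ μ, IsStationaryVec P2 μ → μ = μ2) →
        0 < C1 → 0 < ρ1 → ρ1 < 1 →
        (∀ t : ℕ, specNorm (P1 ^ t - Matrix.of fun _ j => μ1 j) ≤ C1 * ρ1 ^ t) →
        l2norm (μ1 - μ2) ≤ L C1 ρ1 (specNorm P1) (specNorm P2) * specNorm (P1 - P2) := by
  refine ⟨fun C ρ _ _ => C * (1 - ρ)⁻¹, ?_⟩
  intro ι _ _ _ P1 P2 μ1 μ2 C ρ hP1 hP2 hμ1 _ hμ2 _ hC hρ0 hρ1 hdec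
  have key : ∀ v : ι → ℝ, ∑ i, v i = 0 → ∀ t : ℕ,
      l2norm (Matrix.vecMul v (P1 ^ t)) ≤ l2norm v * (C * ρ ^ t) := by
    intro v hv t
    have h := aux_vecMul (P1 ^ t - Matrix.of fun _ j => μ1 j) v
    rw [Matrix.vecMul_sub, aux_rank_one μ1 v hv, sub_zero] at h
    exact h.trans (mul_le_mul_of_nonneg_left (hdec t) (aux_l2norm_nonneg v))
  set δ : ι → ℝ := μ1 - μ2 with hδ
  set e : ι → ℝ := Matrix.vecMul μ2 (P1 - P2) with he
  have hδs : ∑ i, δ i = 0 := by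
    simp [hδ, hμ1.2.1, hμ2.2.1]
  have hes : ∑ i, e i = 0 := by
    simp only [he, Matrix.vecMul_sub, Pi.sub_apply, Finset.sum_sub_distrib,
      aux_sum_vecMul P1 hP1, aux_sum_vecMul P2 hP2, sub_self]
  have hfix : δ = Matrix.vecMul δ P1 + e := by
    rw [hδ, he, Matrix.vecMul_sub, Matrix.sub_vecMul, hμ1.2.2, hμ2.2.2]
    abel
  have hE : l2norm e ≤ specNorm (P1 - P2) := by
    have h := aux_vecMul (P1 - P2) μ2
    have h' := mul_le_mul_of_nonneg_right (aux_prob μ2 hμ2.1 hμ2.2.1)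
      (aux_specNorm_nonneg (P1 - P2))
    linarith
  have hind : ∀ t : ℕ, l2norm δ ≤ l2norm (Matrix.vecMul δ (P1 ^ t)) +
      ∑ s ∈ Finset.range t, l2norm e * (C * ρ ^ s) := by
    intro t
    induction t with
    | zero => simp
    | succ t ih =>
      rw [Finset.sum_range_succ]
      have h1 : Matrix.vecMul δ (P1 ^ t) =
          Matrix.vecMul δ (P1 ^ (t + 1)) + Matrix.vecMul e (P1 ^ t) := by
        conv_lhs => rw [hfix]
        rw [Matrix.add_vecMul, Matrix.vecMul_vecMul, ← pow_succ']
      have h2 := aux_l2norm_add (Matrix.vecMul δ (P1 ^ (t + 1))) (Matrix.vecMul e (P1 ^ t))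
      rw [← h1] at h2
      have h3 := key e hes t
      linarith
  have hbound : ∀ t : ℕ, l2norm δ ≤ l2norm δ * (C * ρ ^ t) +
      C * (1 - ρ)⁻¹ * specNorm (P1 - P2) := by
    intro t
    have h1 := hind t
    have h2 := key δ hδs t
    have h3 : ∑ s ∈ Finset.range t, ρ ^ s ≤ (1 - ρ)⁻¹ := by
      rw [← tsum_geometric_of_lt_one hρ0.le hρ1]
      exact (summable_geometric_of_lt_one hρ0.le hρ1).sum_le_tsum _
        (fun i _ => pow_nonneg hρ0.le i)
    have h4 : ∑ s ∈ Finset.range t, l2norm e * (C * ρ ^ s) ≤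
        C * (1 - ρ)⁻¹ * specNorm (P1 - P2) := by
      rw [← Finset.mul_sum, ← Finset.mul_sum, mul_comm]
      exact mul_le_mul (mul_le_mul_of_nonneg_left h3 hC.le) hE (aux_l2norm_nonneg _)
        (mul_nonneg hC.le (inv_nonneg.mpr (by linarith)))
    linarith
  have hlim : Filter.Tendsto (fun t : ℕ => l2norm δ * (C * ρ ^ t) +
      C * (1 - ρ)⁻¹ * specNorm (P1 - P2)) Filter.atTop
      (nhds (l2norm δ * (C * 0) + C * (1 - ρ)⁻¹ * specNorm (P1 - P2))) :=
    (((tendsto_pow_atTop_nhds_zero_of_lt_one hρ0.le hρ1).const_mul C).const_mul _).add_const _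
  have := ge_of_tendsto' hlim hbound
  simpa using this
end
end
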